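/- Every Stone distributive nearlattice is normal: if a⊤ ⋎ a⊤⊤ = A for all a, then (a ∨ b)⊤ = a⊤ ⋎ b⊤ for all a, b. -/

import Mathlib

/-- A distributive nearlattice, presented (following Araújo–Kinyon) as a
join-semilattice with top together with its canonical ternary operation
`m x y z = (x ⊔ z) ⊓_z (y ⊔ z)` (the meet taken in the principal filter `[z)`),
satisfying the Araújo–Kinyon identities.  This is equivalent to: every
principal filter is a bounded distributive lattice. -/
class DNearlattice (A : Type*) extends SemilatticeSup A, OrderTop A where
  m : A → A → A → A
  sup_eq_m : ∀ x y : A, x ⊔ y = m x x y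
  m_ax2 : ∀ x y : A, m x y x = x
  m_ax3 : ∀ u w x y z : A,
    m (m x y z) (m y (m u x z) z) w = m w w (m y (m x u z) z)
  m_ax4 : ∀ w x y z : A,
    m x (m y y z) w = m (m x y w) (m x y w) (m x z w)

variable {A : Type*} [DNearlattice A]

/-- The annihilator `a⊤ = {x | x ⊔ a = ⊤}`. -/
def ann (a : A) : Set A := {x : A | x ⊔ a = ⊤}

/-- The annihilator of a set (filter): `F⊤ = {x | ∀ f ∈ F, x ⊔ f = ⊤}`. -/
def annF (F : Set A) : Set A := {x : A | ∀ f ∈ F, x ⊔ f = ⊤}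

/-- The double annihilator `a⊤⊤`. -/
def dann (a : A) : Set A := annF (ann a)

/-- A filter: contains `⊤`, is upward closed, and is closed under existing
binary meets (greatest lower bounds). -/
def IsFil (F : Set A) : Prop :=
  ⊤ ∈ F ∧ (∀ a b : A, a ≤ b → a ∈ F → b ∈ F) ∧
    (∀ a b c : A, a ∈ F → b ∈ F → IsGLB {a, b} c → c ∈ F)

/-- The filter generated by a set: the intersection of all filters containing it. -/
def filGen (X : Set A) : Set A := ⋂₀ {F : Set A | IsFil F ∧ X ⊆ F}

/-- The join of two filters in the lattice of filters. -/
def filJoin (F G : Set A) : Set A := filGen (F ∪ G)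

/-- An ideal: downward closed and closed under joins. -/
def IsIdl (I : Set A) : Prop :=
  (∀ a b : A, a ≤ b → b ∈ I → a ∈ I) ∧ (∀ a b : A, a ∈ I → b ∈ I → a ⊔ b ∈ I)

/-- A prime ideal: a nonempty proper ideal such that whenever an existing
meet `a ∧ b` lies in it, `a` or `b` lies in it. -/
def IsPrimeIdl (P : Set A) : Prop :=
  IsIdl P ∧ P.Nonempty ∧ P ≠ Set.univ ∧
    (∀ a b c : A, IsGLB {a, b} c → c ∈ P → a ∈ P ∨ b ∈ P)

/-- A maximal ideal: a nonempty proper ideal maximal among proper ideals. -/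
def IsMaxIdl (I : Set A) : Prop :=
  IsIdl I ∧ I.Nonempty ∧ I ≠ Set.univ ∧
    (∀ J : Set A, IsIdl J → I ⊆ J → J = I ∨ J = Set.univ)

/-- A prime filter: `a ⊔ b ∈ F` implies `a ∈ F` or `b ∈ F`. -/
def IsPrimeFil (F : Set A) : Prop :=
  IsFil F ∧ ∀ a b : A, a ⊔ b ∈ F → a ∈ F ∨ b ∈ F

/-- An α-filter: a filter containing `a⊤⊤` for each of its elements `a`. -/
def IsAlphaFil (F : Set A) : Prop := IsFil F ∧ ∀ a ∈ F, dann a ⊆ F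

/-- An α-ideal: an ideal `I` such that `I ∩ a⊤⊤ ≠ ∅` implies `a ∈ I`. -/
def IsAlphaIdl (I : Set A) : Prop :=
  IsIdl I ∧ ∀ a : A, (I ∩ dann a).Nonempty → a ∈ I

/-- Quasicomplemented: every `a⊤⊤` is of the form `b⊤`. -/
def Quasicomplemented (B : Type*) [DNearlattice B] : Prop :=
  ∀ a : B, ∃ b : B, dann a = ann b

/-- Normal: `(a ⊔ b)⊤ = a⊤ ⋎ b⊤` for all `a, b`. -/
def NormalNL (B : Type*) [DNearlattice B] : Prop :=
  ∀ a b : B, ann (a ⊔ b) = filJoin (ann a) (ann b)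

/-- Stone: `a⊤ ⋎ a⊤⊤ = A` for all `a`. -/
def StoneNL (B : Type*) [DNearlattice B] : Prop :=
  ∀ a : B, filJoin (ann a) (dann a) = Set.univ

/-!
Let `c ⊔ a ⊔ b = ⊤`. If `x ∈ a⊤` then `x ⊔ c ∈ a⊤`; if `x ∈ a⊤⊤` then `x ⊔ (c ⊔ b) = ⊤`, because
`c ⊔ b ∈ a⊤`, so `x ⊔ c ∈ b⊤`. Hence `a⊤` and `a⊤⊤` both lie in `{x | x ⊔ c ∈ a⊤ ⋎ b⊤}`, which is a
filter by distributivity. In a Stone nearlattice it contains `c`, so `c = c ⊔ c ∈ a⊤ ⋎ b⊤`.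
-/

namespace DNearlattice

theorem m_sup_right (x y z w : A) : m x (y ⊔ z) w = m x y w ⊔ m x z w := by
  rw [sup_eq_m y z, m_ax4, ← sup_eq_m]

theorem m_le_m_right (x w : A) {y z : A} (h : y ≤ z) : m x y w ≤ m x z w := by
  rw [← sup_eq_right.2 h, m_sup_right]
  exact le_sup_left

theorem m_sup_le_m_swap (x y z : A) : m y (x ⊔ z) z ≤ m x y z := by
  have h := m_ax3 x (m x y z) x y z
  rw [m_ax2, ← sup_eq_m, ← sup_eq_m] at h
  exact sup_eq_left.1 h.symm

theorem m_comm (x y z : A) : m x y z = m y x z :=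
  have swap_le (x y : A) : m y x z ≤ m x y z :=
    (m_le_m_right y z le_sup_left).trans (m_sup_le_m_swap x y z)
  le_antisymm (swap_le y x) (swap_le x y)

theorem m_sup_left (x y z w : A) : m (x ⊔ y) z w = m x z w ⊔ m y z w := by
  rw [m_comm, m_sup_right, m_comm z x, m_comm z y]

theorem m_self_right (x z : A) : m x z z = z := by
  rw [m_comm, m_ax2]

theorem le_m (x y z : A) : z ≤ m x y z :=
  calc z = m y z z := (m_self_right y z).symm
    _ ≤ m y (x ⊔ z) z := m_le_m_right y z le_sup_right
    _ ≤ m x y z := m_sup_le_m_swap x y z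

theorem m_eq_sup_of_le (z : A) {x y : A} (h : y ≤ x) : m x y z = y ⊔ z := by
  have h_ax := m_ax3 y z x x y
  rwa [m_ax2, m_self_right, m_self_right, ← sup_eq_m, ← sup_eq_m, sup_eq_left.2 h,
    sup_comm] at h_ax

theorem m_le_sup_left (x y z : A) : m x y z ≤ x ⊔ z :=
  calc m x y z ≤ m x (y ⊔ x) z := m_le_m_right x z le_sup_left
    _ = m (y ⊔ x) x z := m_comm ..
    _ = x ⊔ z := m_eq_sup_of_le z le_sup_right

theorem m_le_sup_right (x y z : A) : m x y z ≤ y ⊔ z :=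
  m_comm x y z ▸ m_le_sup_left y x z

theorem le_m_of_le_sup {d x y z : A} (hx : d ≤ x ⊔ z) (hy : d ≤ y ⊔ z) : d ≤ m x y z :=
  calc d ≤ d ⊔ z := le_sup_left
    _ = m (x ⊔ z) d z := (m_eq_sup_of_le z hx).symm
    _ ≤ m (x ⊔ z) (y ⊔ z) z := m_le_m_right _ z hy
    _ ≤ m y (x ⊔ z) z := m_sup_le_m_swap ..
    _ ≤ m x y z := m_sup_le_m_swap ..

theorem isGLB_m (x y z : A) : IsGLB {x ⊔ z, y ⊔ z} (m x y z) := by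
  refine ⟨?_, fun d hd => le_m_of_le_sup (hd (by simp)) (hd (by simp))⟩
  rintro _ (rfl | rfl)
  · exact m_le_sup_left x y z
  · exact m_le_sup_right x y z

theorem m_sup_sup (x y z t : A) : m (x ⊔ t) (y ⊔ t) z = m x y z ⊔ t := by
  apply le_antisymm
  · have h_sup : t ⊔ z ≤ m x y z ⊔ t := sup_le le_sup_right ((le_m x y z).trans le_sup_left)
    rw [m_sup_right, m_sup_left]
    exact sup_le (sup_le le_sup_left ((m_le_sup_left t y z).trans h_sup))
      ((m_le_sup_right _ t z).trans h_sup)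
  · apply le_m_of_le_sup
    · rw [sup_right_comm]
      exact sup_le_sup_right (m_le_sup_left x y z) t
    · rw [sup_right_comm]
      exact sup_le_sup_right (m_le_sup_right x y z) t

theorem isGLB_sup_right {p q c : A} (h : IsGLB {p, q} c) (x : A) :
    IsGLB {p ⊔ x, q ⊔ x} (c ⊔ x) := by
  have hp : c ≤ p := h.1 (by simp)
  have hq : c ≤ q := h.1 (by simp)
  have hm : m p q c = c := by
    have h_glb := isGLB_m p q c
    rw [sup_eq_left.2 hp, sup_eq_left.2 hq] at h_glb
    exact h_glb.unique h
  have h_glb := isGLB_m (p ⊔ x) (q ⊔ x) c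
  rwa [m_sup_sup, hm, sup_eq_left.2 (le_sup_of_le_left hp),
    sup_eq_left.2 (le_sup_of_le_left hq)] at h_glb

end DNearlattice

theorem isFil_singleton_top : IsFil ({⊤} : Set A) := by
  refine ⟨rfl, fun a b hab ha => ?_, fun a b c ha hb hc => ?_⟩
  · exact top_le_iff.1 (ha ▸ hab)
  · refine top_le_iff.1 (hc.2 ?_)
    rintro _ (rfl | rfl)
    exacts [ha.ge, hb.ge]

theorem IsFil.setOf_sup_mem {F : Set A} (hF : IsFil F) (c : A) : IsFil {x | x ⊔ c ∈ F} := by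
  obtain ⟨h_top, h_up, h_glb⟩ := hF
  refine ⟨?_, fun x y hxy hx => ?_, fun x y z hx hy hz => ?_⟩
  · change ⊤ ⊔ c ∈ F
    rwa [top_sup_eq]
  · exact h_up _ _ (sup_le_sup_right hxy c) hx
  · exact h_glb _ _ _ hx hy (DNearlattice.isGLB_sup_right hz c)

theorem isFil_ann (a : A) : IsFil (ann a) :=
  isFil_singleton_top.setOf_sup_mem a

theorem ann_mono {a b : A} (h : a ≤ b) : ann a ⊆ ann b := fun x (hx : x ⊔ a = ⊤) =>
  top_le_iff.1 (hx ▸ sup_le_sup_left h x)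

theorem isFil_filGen (X : Set A) : IsFil (filGen X) :=
  ⟨fun _ hF => hF.1.1, fun a b hab ha F hF => hF.1.2.1 a b hab (ha F hF),
    fun a b c ha hb hc F hF => hF.1.2.2 a b c (ha F hF) (hb F hF) hc⟩

theorem subset_filGen (X : Set A) : X ⊆ filGen X := fun _ hx _ hF => hF.2 hx

theorem isFil_filJoin (F G : Set A) : IsFil (filJoin F G) := isFil_filGen _

theorem subset_filJoin_left (F G : Set A) : F ⊆ filJoin F G :=
  Set.subset_union_left.trans (subset_filGen _)

theorem subset_filJoin_right (F G : Set A) : G ⊆ filJoin F G :=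
  Set.subset_union_right.trans (subset_filGen _)

theorem filJoin_subset {F G H : Set A} (hH : IsFil H) (hF : F ⊆ H) (hG : G ⊆ H) :
    filJoin F G ⊆ H :=
  Set.sInter_subset_of_mem ⟨hH, Set.union_subset hF hG⟩

theorem filJoin_ann_subset_ann_sup (a b : A) : filJoin (ann a) (ann b) ⊆ ann (a ⊔ b) :=
  filJoin_subset (isFil_ann _) (ann_mono le_sup_left) (ann_mono le_sup_right)

theorem sup_mem_ann_of_mem_dann {a b c x : A} (hc : c ∈ ann (a ⊔ b)) (hx : x ∈ dann a) :
    x ⊔ c ∈ ann b := by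
  have hcb : c ⊔ b ∈ ann a := by
    change c ⊔ b ⊔ a = ⊤
    rwa [sup_assoc, sup_comm b a]
  change x ⊔ c ⊔ b = ⊤
  rw [sup_assoc]
  exact hx _ hcb

theorem ann_sup_inter_filJoin_dann_subset (a b : A) :
    ann (a ⊔ b) ∩ filJoin (ann a) (dann a) ⊆ filJoin (ann a) (ann b) := by
  rintro c ⟨hc, hc_join⟩
  have h_join := isFil_filJoin (ann a) (ann b)
  have h_ann : ann a ⊆ {x | x ⊔ c ∈ filJoin (ann a) (ann b)} := fun _ hx =>
    h_join.2.1 _ _ le_sup_left (subset_filJoin_left _ _ hx)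
  have h_dann : dann a ⊆ {x | x ⊔ c ∈ filJoin (ann a) (ann b)} := fun _ hx =>
    subset_filJoin_right _ _ (sup_mem_ann_of_mem_dann hc hx)
  have h_self : c ⊔ c ∈ filJoin (ann a) (ann b) :=
    filJoin_subset (h_join.setOf_sup_mem c) h_ann h_dann hc_join
  rwa [sup_idem] at h_self

/-- Every Stone distributive nearlattice is normal. -/
theorem stmt17 (hs : StoneNL A) : NormalNL A := by
  intro a b
  refine Set.Subset.antisymm (fun c hc => ?_) (filJoin_ann_subset_ann_sup a b)
  have hc_join : c ∈ filJoin (ann a) (dann a) := hs a ▸ Set.mem_univ c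
  exact ann_sup_inter_filJoin_dann_subset a b ⟨hc, hc_join⟩
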